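/- arXiv:0811.2153 — 2 statements merged into one kernel-verified Lean document; each statement's English description precedes it below -/
import Mathlib

section
/- Let K be a field, A an associative K-algebra (not necessarily unital) with product ⋆, and Π : A → A a K-linear projection (Π ∘ Π = Π). Assume: (i) for every x in the range of Π and every a ∈ A, Π(x ⋆ Π(a)) = Π(x ⋆ a); and (ii) for all x, y in the range of Π, the commutator x ⋆ y − y ⋆ x lies in the range of Π (equivalently Π(x⋆y − y⋆x) = x⋆y − y⋆x). Then the product x ▷ y := Π(x ⋆ y) is a left pre-Lie product on the range of Π: for all x, y, z in the range of Π, x ▷ (y ▷ z) − (x ▷ y) ▷ z = y ▷ (x ▷ z) − (y ▷ x) ▷ z. -/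
/-- Let `A` be an associative (not necessarily unital) `K`-algebra with a linear
projection `P` such that (i) `P (x * P a) = P (x * a)` for `x` in the range of `P` and all
`a`, and (ii) the commutator of two elements of the range of `P` lies in the range of `P`.
Then `x ▷ y := P (x * y)` is a left pre-Lie product on the range of `P`. -/
theorem projection_product_isPreLie (K : Type*) [Field K] (A : Type*) [NonUnitalRing A]
    [Module K A] [SMulCommClass K A A] [IsScalarTower K A A]
    (P : A →ₗ[K] A) (hproj : P ∘ₗ P = P)
    (hcomp : ∀ x ∈ LinearMap.range P, ∀ a : A, P (x * P a) = P (x * a))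
    (hcommutator : ∀ x ∈ LinearMap.range P, ∀ y ∈ LinearMap.range P,
      P (x * y - y * x) = x * y - y * x) :
    ∀ x ∈ LinearMap.range P, ∀ y ∈ LinearMap.range P, ∀ z ∈ LinearMap.range P,
      P (x * P (y * z)) - P (P (x * y) * z) =
        P (y * P (x * z)) - P (P (y * x) * z) := by
  intro x hx y hy z _
  -- `P (x * y) - P (y * x) = P (x * y - y * x)` is the commutator itself, by `hcommutator`.
  have h : P (P (x * y) * z) - P (P (y * x) * z) = P (x * (y * z)) - P (y * (x * z)) := by
    rw [← map_sub, ← sub_mul, ← map_sub, hcommutator x hx y hy, sub_mul, map_sub,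
      mul_assoc, mul_assoc]
  rw [hcomp x hx, hcomp y hy, sub_eq_sub_iff_sub_eq_sub, h]
end

section
/- Let K be a field, H a bialgebra over K with multiplication m_H, comultiplication Δ_H and counit ε_H, and C a coalgebra over K with comultiplication Δ_C. Let Φ : C → H ⊗ C be a K-linear map satisfying (id_H ⊗ Δ_C) ∘ Φ = m^{1,3} ∘ (Φ ⊗ Φ) ∘ Δ_C, where m^{1,3} : H ⊗ C ⊗ H ⊗ C → H ⊗ C ⊗ C sends h ⊗ c ⊗ h' ⊗ c' to hh' ⊗ c ⊗ c', and satisfying (ε_H ⊗ id_C) ∘ Φ = id_C. Let α : H → K be an infinitesimal character of H, i.e. α(xy) = α(x)ε_H(y) + ε_H(x)α(y) for all x, y ∈ H. For a K-linear form a : C → K define D_α(a) : C → K by D_α(a) = (α ⊗ a) ∘ Φ (composing with the canonical identification K ⊗ K ≅ K). Then D_α is a derivation of the convolution algebra of linear forms on C: for all linear forms a, b : C → K, D_α(a ∗ b) = D_α(a) ∗ b + a ∗ D_α(b), where (a ∗ b) = (a ⊗ b) ∘ Δ_C. -/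
/-!
Pairing the compatibility between `Φ` and `Δ_C` with `α ⊗ a ⊗ b` expresses `D_α(a ∗ b)` as a
functional of `(Φ ⊗ Φ) ∘ Δ_C` in which `α` is evaluated on a product in `H`. Since `α` is an
infinitesimal character, this functional splits as `(α ⊗ a) ⊗ (ε ⊗ b) + (ε ⊗ a) ⊗ (α ⊗ b)`
(`pairing_comp_m13`), so that
`D_α(a ∗ b) = D_α(a) ∗ D_ε(b) + D_ε(a) ∗ D_α(b)` (`convC_Dmap`). The counit condition says exactly that `D_ε` is
the identity (`Dmap_counit`).
-/

open TensorProduct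

/-- `m^{1,3} : H ⊗ C ⊗ H ⊗ C → H ⊗ C ⊗ C`, `h ⊗ c ⊗ h' ⊗ c' ↦ hh' ⊗ c ⊗ c'`
(here `(H ⊗ C) ⊗ (H ⊗ C) → H ⊗ (C ⊗ C)`). -/
noncomputable def m13 (K : Type*) [Field K] (H : Type*) [Ring H] [Algebra K H]
    (C : Type*) [AddCommGroup C] [Module K C] :
    (H ⊗[K] C) ⊗[K] (H ⊗[K] C) →ₗ[K] H ⊗[K] (C ⊗[K] C) :=
  TensorProduct.map (LinearMap.mul' K H) LinearMap.id ∘ₗ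
    (TensorProduct.tensorTensorTensorComm K H C H C).toLinearMap

/-- The map `D_α(a) := (α ⊗ a) ∘ Φ : C → K` (using `K ⊗ K ≅ K`). -/
noncomputable def Dmap (K : Type*) [Field K] (H : Type*) [AddCommGroup H] [Module K H]
    (C : Type*) [AddCommGroup C] [Module K C] (Φ : C →ₗ[K] H ⊗[K] C)
    (α : H →ₗ[K] K) (a : C →ₗ[K] K) : C →ₗ[K] K :=
  LinearMap.mul' K K ∘ₗ TensorProduct.map α a ∘ₗ Φ

/-- The convolution product of linear forms on a coalgebra `C`: `a ∗ b = (a ⊗ b) ∘ Δ_C`. -/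
noncomputable def convC (K : Type*) [Field K] (C : Type*) [AddCommGroup C] [Module K C]
    [Coalgebra K C] (a b : C →ₗ[K] K) : C →ₗ[K] K :=
  LinearMap.mul' K K ∘ₗ TensorProduct.map a b ∘ₗ Coalgebra.comul

theorem Dmap_counit (K : Type*) [Field K] (H : Type*) [Ring H]
    [Bialgebra K H] (C : Type*) [AddCommGroup C] [Module K C]
    (Φ : C →ₗ[K] H ⊗[K] C)
    (hcounit : (TensorProduct.lid K C).toLinearMap ∘ₗ
        TensorProduct.map (Coalgebra.counit (R := K) (A := H)) LinearMap.id ∘ₗ Φ =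
      LinearMap.id)
    (a : C →ₗ[K] K) :
    Dmap K H C Φ (Coalgebra.counit (R := K) (A := H)) a = a := by
  have key : LinearMap.mul' K K ∘ₗ TensorProduct.map (Coalgebra.counit (R := K) (A := H)) a =
      a ∘ₗ (TensorProduct.lid K C).toLinearMap ∘ₗ
        TensorProduct.map (Coalgebra.counit (R := K) (A := H)) LinearMap.id := by
    ext h c
    simp
  calc Dmap K H C Φ (Coalgebra.counit (R := K) (A := H)) a
      = (LinearMap.mul' K K ∘ₗ TensorProduct.map (Coalgebra.counit (R := K) (A := H)) a) ∘ₗ Φ :=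
        rfl
    _ = a ∘ₗ ((TensorProduct.lid K C).toLinearMap ∘ₗ
        TensorProduct.map (Coalgebra.counit (R := K) (A := H)) LinearMap.id ∘ₗ Φ) := by
        rw [key]; rfl
    _ = a := by rw [hcounit, LinearMap.comp_id]

theorem convC_Dmap (K : Type*) [Field K] (H : Type*) [AddCommGroup H] [Module K H]
    (C : Type*) [AddCommGroup C] [Module K C] [Coalgebra K C]
    (Φ : C →ₗ[K] H ⊗[K] C) (α β : H →ₗ[K] K) (a b : C →ₗ[K] K) :
    convC K C (Dmap K H C Φ α a) (Dmap K H C Φ β b) =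
      (LinearMap.mul' K K ∘ₗ TensorProduct.map (LinearMap.mul' K K ∘ₗ TensorProduct.map α a)
        (LinearMap.mul' K K ∘ₗ TensorProduct.map β b)) ∘ₗ
        TensorProduct.map Φ Φ ∘ₗ Coalgebra.comul := by
  change LinearMap.mul' K K ∘ₗ TensorProduct.map
    ((LinearMap.mul' K K ∘ₗ TensorProduct.map α a) ∘ₗ Φ)
    ((LinearMap.mul' K K ∘ₗ TensorProduct.map β b) ∘ₗ Φ) ∘ₗ Coalgebra.comul = _
  rw [TensorProduct.map_comp]; rfl

/-- The Leibniz rule for `α`, transported to the functional `(α ⊗ a ⊗ b) ∘ m^{1,3}`. -/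
theorem pairing_comp_m13 (K : Type*) [Field K] (H : Type*) [Ring H]
    [Bialgebra K H] (C : Type*) [AddCommGroup C] [Module K C]
    (α : H →ₗ[K] K)
    (hα : ∀ x y : H, α (x * y) =
      α x * Coalgebra.counit (R := K) y + Coalgebra.counit (R := K) x * α y)
    (a b : C →ₗ[K] K) :
    (LinearMap.mul' K K ∘ₗ TensorProduct.map α (LinearMap.mul' K K ∘ₗ TensorProduct.map a b)) ∘ₗ
        m13 K H C =
      LinearMap.mul' K K ∘ₗ TensorProduct.map (LinearMap.mul' K K ∘ₗ TensorProduct.map α a)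
          (LinearMap.mul' K K ∘ₗ TensorProduct.map (Coalgebra.counit (R := K) (A := H)) b) +
        LinearMap.mul' K K ∘ₗ TensorProduct.map
          (LinearMap.mul' K K ∘ₗ TensorProduct.map (Coalgebra.counit (R := K) (A := H)) a)
          (LinearMap.mul' K K ∘ₗ TensorProduct.map α b) := by
  apply TensorProduct.ext_fourfold'
  intro x c y d
  simp [m13, hα]
  ring

/-- If `Φ : C → H ⊗ C` is a coaction-like map satisfying
`(id_H ⊗ Δ_C) ∘ Φ = m^{1,3} ∘ (Φ ⊗ Φ) ∘ Δ_C` and `(ε_H ⊗ id_C) ∘ Φ = id_C`, and `α` is an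
infinitesimal character of the bialgebra `H`, then `a ↦ D_α(a) = (α ⊗ a) ∘ Φ` is a derivation
of the convolution algebra of linear forms on `C`. -/
theorem Dmap_is_convolution_derivation (K : Type*) [Field K] (H : Type*) [Ring H]
    [Bialgebra K H] (C : Type*) [AddCommGroup C] [Module K C] [Coalgebra K C]
    (Φ : C →ₗ[K] H ⊗[K] C)
    (hcoact : LinearMap.lTensor H (Coalgebra.comul (R := K) (A := C)) ∘ₗ Φ =
      m13 K H C ∘ₗ TensorProduct.map Φ Φ ∘ₗ Coalgebra.comul)
    (hcounit : (TensorProduct.lid K C).toLinearMap ∘ₗ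
        TensorProduct.map (Coalgebra.counit (R := K) (A := H)) LinearMap.id ∘ₗ Φ =
      LinearMap.id)
    (α : H →ₗ[K] K)
    (hα : ∀ x y : H, α (x * y) =
      α x * Coalgebra.counit (R := K) y + Coalgebra.counit (R := K) x * α y)
    (a b : C →ₗ[K] K) :
    Dmap K H C Φ α (convC K C a b) =
      convC K C (Dmap K H C Φ α a) b + convC K C a (Dmap K H C Φ α b) := by
  set ε := Coalgebra.counit (R := K) (A := H)
  have hsplit : Dmap K H C Φ α (convC K C a b) =
      convC K C (Dmap K H C Φ α a) (Dmap K H C Φ ε b) +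
        convC K C (Dmap K H C Φ ε a) (Dmap K H C Φ α b) := by
    calc Dmap K H C Φ α (convC K C a b)
        = (LinearMap.mul' K K ∘ₗ
            TensorProduct.map α (LinearMap.mul' K K ∘ₗ TensorProduct.map a b)) ∘ₗ
            (LinearMap.lTensor H (Coalgebra.comul (R := K) (A := C)) ∘ₗ Φ) := by
          have h : TensorProduct.map α (convC K C a b) =
              TensorProduct.map α (LinearMap.mul' K K ∘ₗ TensorProduct.map a b) ∘ₗ
                LinearMap.lTensor H (Coalgebra.comul (R := K) (A := C)) := by
            rw [LinearMap.lTensor, ← TensorProduct.map_comp, LinearMap.comp_id]; rfl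
          rw [Dmap, h]; rfl
      _ = ((LinearMap.mul' K K ∘ₗ
            TensorProduct.map α (LinearMap.mul' K K ∘ₗ TensorProduct.map a b)) ∘ₗ
            m13 K H C) ∘ₗ TensorProduct.map Φ Φ ∘ₗ Coalgebra.comul := by
          rw [hcoact]; rfl
      _ = _ := by
          rw [pairing_comp_m13 K H C α hα a b, LinearMap.add_comp,
            convC_Dmap, convC_Dmap]
  rwa [Dmap_counit K H C Φ hcounit a, Dmap_counit K H C Φ hcounit b] at hsplit
end
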